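/- arXiv:2506.14091 — 2 statements merged into one kernel-verified Lean document; each statement's English description precedes it below -/
import Mathlib

section
/- For all real parameters a₀, a₁, a₂, b₀, b₁, b₂, the Abel equation x' = (a₀ + a₁t + a₂t²)x³ + (b₀ + b₁t + b₂t²)x², t ∈ [0,1], has at most three limit cycles, where the trivial solution x = 0 is counted among them when it is isolated. -/
/-!
The bound splits according to whether `A` and `B` are linearly dependent.

If `l A + m B = 0` with `(l, m) ≠ 0`, the equation separates as `x' = f(t) x² (m x - l)`. A closed
solution off the roots of `x² (m x - l)` can be shifted along the autonomous flow to nearby closed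
solutions, so limit cycles start at `0` or `l / m` (`LimitCycle.root_of_dependent`).

If `A` and `B` are independent, three distinct nonzero closed solutions cannot coexist
(`RecSol.three_false`), which leaves at most two limit cycles besides `x = 0`. The reciprocals
`y = 1 / x` satisfy `y' = -(A + B y) / y` and are continued periodically to `[0,2]`, so that an arc
of the circle `[0,1]/0∼1` passing through the endpoint becomes an interval.

* `pair_not_closed`: on an arc where some `l A + m B` has a strict sign, two distinct solutions
  cannot both return to their initial values.
* `RecSol.no_return`: a nontrivial combination of `A` and `B` that vanishes at `s` has at most one
  other root. So one of the two arcs between any two times `s`, `s'` admits a combination of strict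
  sign, and two closed solutions cannot satisfy `y(s) = y(s')` and `z(s) = z(s')` at once.
* Since `(y₁ - y₃)' = A (y₁ - y₃) / (y₁ y₃)`, either `A` has a strict sign, which contradicts
  `pair_not_closed`, or `y₁ - y₃` increases on one arc and decreases on the complementary one. In
  the second case the ratio `(y₁ - y₂) / (y₁ - y₃)`, viewed as a function of the value of
  `y₁ - y₃` on each arc, takes the same values at both ends, while the difference of its two
  branches solves a linear equation whose forcing term does not vanish, by `RecSol.no_return`. This
  is impossible (`RecSol.three_false_of_arcs`).
-/

open Set intervalIntegral

noncomputable section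

/-- `x` is a solution of the Abel equation `x' = A(t) x^3 + B(t) x^2` on `[0,T]`. -/
def AbelSol (A B : ℝ → ℝ) (T : ℝ) (x : ℝ → ℝ) : Prop :=
  ∀ t ∈ Set.Icc (0:ℝ) T,
    HasDerivWithinAt x (A t * x t ^ 3 + B t * x t ^ 2) (Set.Icc (0:ℝ) T) t

/-- A closed solution of the Abel equation on `[0,T]`. -/
def ClosedSol (A B : ℝ → ℝ) (T : ℝ) (x : ℝ → ℝ) : Prop :=
  AbelSol A B T x ∧ x 0 = x T

/-- A limit cycle: an isolated closed solution (isolated among initial values of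
closed solutions). -/
def LimitCycle (A B : ℝ → ℝ) (T : ℝ) (x : ℝ → ℝ) : Prop :=
  ClosedSol A B T x ∧
    ∃ ε > (0:ℝ), ∀ y : ℝ → ℝ, ClosedSol A B T y → |y 0 - x 0| < ε → y 0 = x 0

/-- The set of initial values of limit cycles of the Abel equation. -/
def LCInits (A B : ℝ → ℝ) (T : ℝ) : Set ℝ :=
  {v | ∃ x : ℝ → ℝ, LimitCycle A B T x ∧ x 0 = v}

/-- `g` has a zero of multiplicity at least `m` at `t` (derivatives taken within `E`). -/
def ZeroOrderGe (E : Set ℝ) (g : ℝ → ℝ) (t : ℝ) (m : ℕ) : Prop :=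
  ∀ k < m, iteratedDerivWithin k g E t = 0

/-- `g` has at most `n` zeros on `E`, counted with multiplicities. -/
def AtMostZerosOn (E : Set ℝ) (g : ℝ → ℝ) (n : ℕ) : Prop :=
  ∀ (S : Finset ℝ) (m : ℝ → ℕ),
    (∀ t ∈ S, t ∈ E ∧ 1 ≤ m t ∧ ZeroOrderGe E g t (m t)) →
      (∑ t ∈ S, m t) ≤ n

/-- `{f₀, f₁, f₂}` is an ET-system on `E`: linearly independent on `E`, and every
nontrivial linear combination has at most two zeros on `E` counted with multiplicities. -/
def IsETSystem3 (E : Set ℝ) (f₀ f₁ f₂ : ℝ → ℝ) : Prop :=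
  (∀ a b c : ℝ, (∀ t ∈ E, a * f₀ t + b * f₁ t + c * f₂ t = 0) → a = 0 ∧ b = 0 ∧ c = 0) ∧
  ∀ a b c : ℝ, ¬(a = 0 ∧ b = 0 ∧ c = 0) →
    AtMostZerosOn E (fun t => a * f₀ t + b * f₁ t + c * f₂ t) 2

/-- `{A, B}` is an ET-system with accuracy one on `E`: linearly independent on `E`, and
every nontrivial linear combination has at most two zeros on `E` counted with
multiplicities. -/
def IsETAcc1 (E : Set ℝ) (A B : ℝ → ℝ) : Prop :=
  (∀ l m : ℝ, (∀ t ∈ E, l * A t + m * B t = 0) → l = 0 ∧ m = 0) ∧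
  ∀ l m : ℝ, ¬(l = 0 ∧ m = 0) → AtMostZerosOn E (fun t => l * A t + m * B t) 2

/-- `P` is a Poincaré (time-`T`) map of the Abel equation on the set `U` of initial
values. -/
def IsPoincareOn (A B : ℝ → ℝ) (T : ℝ) (P : ℝ → ℝ) (U : Set ℝ) : Prop :=
  ∀ y ∈ U, ∃ z : ℝ → ℝ, AbelSol A B T z ∧ z 0 = y ∧ z T = P y

/-! ### Calculus on an interval -/

lemma const_sign {f : ℝ → ℝ} {s : Set ℝ} (hs : s.OrdConnected) (hf : ContinuousOn f s)
    (h0 : ∀ t ∈ s, f t ≠ 0) : (∀ t ∈ s, 0 < f t) ∨ (∀ t ∈ s, f t < 0) := by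
  by_contra hcon
  push Not at hcon
  obtain ⟨⟨a, ha, ha'⟩, b, hb, hb'⟩ := hcon
  have := hs.isPreconnected.intermediate_value ha hb hf
  obtain ⟨c, hc, hc'⟩ := this ⟨ha', hb'⟩
  exact h0 c hc hc'

lemma exists_primitive {a b : ℝ} (hab : a ≤ b) {g : ℝ → ℝ} (hg : ContinuousOn g (Icc a b)) :
    ∃ G : ℝ → ℝ, Continuous G ∧ ∀ t ∈ Icc a b, HasDerivWithinAt G (g t) (Icc a b) t := by
  have hc : Continuous (IccExtend hab ((Icc a b).domRestrict g)) :=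
    (continuousOn_iff_continuous_domRestrict.1 hg).Icc_extend'
  have hd : ∀ t, HasDerivAt (fun t => ∫ s in a..t, IccExtend hab ((Icc a b).domRestrict g) s)
      (IccExtend hab ((Icc a b).domRestrict g) t) t := 
    fun t => (hc.integral_hasStrictDerivAt a t).hasDerivAt
  refine ⟨_, continuous_iff_continuousAt.2 fun t => (hd t).continuousAt, fun t ht => ?_⟩
  have := (hd t).hasDerivWithinAt (s := Icc a b)
  rwa [IccExtend_of_mem hab _ ht] at this

lemma lt_of_deriv_pos {f f' : ℝ → ℝ} {a b : ℝ} (hab : a < b)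
    (hf : ContinuousOn f (Icc a b)) (hd : ∀ t ∈ Ioo a b, HasDerivAt f (f' t) t)
    (hp : ∀ t ∈ Ioo a b, 0 < f' t) : f a < f b := by
  obtain ⟨c, hc, h⟩ := exists_hasDerivAt_eq_slope f f' hab hf hd
  have h1 := hp c hc
  rw [h] at h1
  have := (div_pos_iff_of_pos_right (sub_pos.2 hab)).1 h1
  linarith

/-- The derivative may be missing at one point `j`; this absorbs the corner at the junction of the
periodic extension, and isolated zeros of the coefficients. -/
lemma strictMonoOn_of_deriv_pos_off {f f' : ℝ → ℝ} {a b j : ℝ}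
    (hf : ContinuousOn f (Icc a b))
    (hd : ∀ t ∈ Ioo a b, t ≠ j → HasDerivAt f (f' t) t)
    (hp : ∀ t ∈ Ioo a b, t ≠ j → 0 < f' t) : StrictMonoOn f (Icc a b) := by
  have key : ∀ x ∈ Icc a b, ∀ y ∈ Icc a b, x < y → j ∉ Ioo x y → f x < f y := by
    intro x hx y hy hxy hj
    have hsub : ∀ t ∈ Ioo x y, t ∈ Ioo a b ∧ t ≠ j := fun t ht =>
      ⟨⟨hx.1.trans_lt ht.1, ht.2.trans_le hy.2⟩, fun h => hj (h ▸ ht)⟩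
    exact lt_of_deriv_pos hxy (hf.mono (Icc_subset_Icc hx.1 hy.2))
      (fun t ht => hd t (hsub t ht).1 (hsub t ht).2) (fun t ht => hp t (hsub t ht).1 (hsub t ht).2)
  intro x hx y hy hxy
  by_cases hj : j ∈ Ioo x y
  · have hjm : j ∈ Icc a b := ⟨hx.1.trans hj.1.le, hj.2.le.trans hy.2⟩
    exact (key x hx j hjm hj.1 (fun h => lt_irrefl _ h.2)).trans
      (key j hjm y hy hj.2 (fun h => lt_irrefl _ h.1))
  · exact key x hx y hy hxy hj

/-- Variation of constants: `G` is a primitive of `g`, so `exp (-G)` is an integrating factor for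
`v' = g v + h` with `h > 0`. -/
lemma linear_strictMonoOn {v g h G : ℝ → ℝ} {a b j : ℝ}
    (hv : ContinuousOn v (Icc a b)) (hG : ContinuousOn G (Icc a b))
    (hGd : ∀ t ∈ Ioo a b, t ≠ j → HasDerivAt G (g t) t)
    (hvd : ∀ t ∈ Ioo a b, t ≠ j → HasDerivAt v (g t * v t + h t) t)
    (hh : ∀ t ∈ Ioo a b, t ≠ j → 0 < h t) :
    StrictMonoOn (fun t => v t * Real.exp (-G t)) (Icc a b) := by
  refine strictMonoOn_of_deriv_pos_off (j := j) (f' := fun t => h t * Real.exp (-G t))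
    (hv.mul (Real.continuous_exp.comp_continuousOn hG.neg)) ?_ ?_
  · intro t ht hj
    have := (hvd t ht hj).mul (hGd t ht hj).neg.exp
    refine this.congr_deriv ?_
    simp only [Pi.neg_apply]
    ring
  · intro t ht hj
    exact mul_pos (hh t ht hj) (Real.exp_pos _)

/-- A solution of `v' = g v + h` with `h` of one strict sign can cross zero only in one direction,
hence it has no zero at all when it takes the same value at both ends. -/
lemma linear_ne_zero {v g h G : ℝ → ℝ} {a b j : ℝ}
    (hv : ContinuousOn v (Icc a b)) (hG : ContinuousOn G (Icc a b))
    (hGd : ∀ t ∈ Ioo a b, t ≠ j → HasDerivAt G (g t) t)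
    (hvd : ∀ t ∈ Ioo a b, t ≠ j → HasDerivAt v (g t * v t + h t) t)
    (hh : (∀ t ∈ Ioo a b, t ≠ j → 0 < h t) ∨ (∀ t ∈ Ioo a b, t ≠ j → h t < 0))
    (hab : a < b) (hvab : v a = v b) : ∀ t ∈ Icc a b, v t ≠ 0 := by
  wlog hh' : ∀ t ∈ Ioo a b, t ≠ j → 0 < h t generalizing v h
  · have hn := hh.resolve_left hh'
    have := this (v := fun t => - v t) (h := fun t => - h t) hv.neg
      (fun t ht hj => ((hvd t ht hj).neg).congr_deriv (by ring))
      (Or.inl fun t ht hj => neg_pos.2 (hn t ht hj)) (by simp [hvab])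
      (fun t ht hj => neg_pos.2 (hn t ht hj))
    intro t ht h0
    exact this t ht (by simp [h0])
  have hm := linear_strictMonoOn hv hG hGd hvd hh'
  intro t ht h0
  have ha : a ∈ Icc a b := left_mem_Icc.2 hab.le
  have hb : b ∈ Icc a b := right_mem_Icc.2 hab.le
  have h1 := hm.monotoneOn ha ht ht.1
  have h2 := hm.monotoneOn ht hb ht.2
  have h3 := hm ha hb hab
  simp only [h0, zero_mul] at h1 h2 h3
  have h4 : v a ≤ 0 := by
    by_contra h; push Not at h
    linarith [mul_pos h (Real.exp_pos (-G a))]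
  have h5 : 0 ≤ v b := by
    by_contra h; push Not at h
    linarith [mul_neg_of_neg_of_pos h (Real.exp_pos (-G b))]
  have h6 : v b = 0 := by linarith
  have h7 : v a = 0 := by linarith
  simp [h6, h7] at h3

/-- Two reciprocal solutions `y ≠ z` of `y' = -(A + B y) / y` cannot both take equal values at `a`
and `b` if some combination `l A + m B` is positive in between. By `linear_ne_zero`, neither
`l y - m` nor `l z - m` vanishes. If `T' (s) = s / (l s - m)`, then `T (y) - T (z)` has derivative
`(l A + m B) (y - z) / ((l y - m) (l z - m))`, which has a constant sign. -/
lemma pair_not_closed {A B y z G H : ℝ → ℝ} {a b j l m : ℝ} (hab : a < b)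
    (hy : ContinuousOn y (Icc a b)) (hz : ContinuousOn z (Icc a b))
    (hG : ContinuousOn G (Icc a b)) (hH : ContinuousOn H (Icc a b))
    (hy0 : ∀ t ∈ Icc a b, y t ≠ 0) (hz0 : ∀ t ∈ Icc a b, z t ≠ 0)
    (hyz : ∀ t ∈ Icc a b, y t - z t ≠ 0)
    (hyd : ∀ t ∈ Ioo a b, t ≠ j → HasDerivAt y (-(A t + B t * y t) / y t) t)
    (hzd : ∀ t ∈ Ioo a b, t ≠ j → HasDerivAt z (-(A t + B t * z t) / z t) t)
    (hGd : ∀ t ∈ Ioo a b, t ≠ j → HasDerivAt G (B t / y t) t)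
    (hHd : ∀ t ∈ Ioo a b, t ≠ j → HasDerivAt H (B t / z t) t)
    (hyc : y a = y b) (hzc : z a = z b)
    (hC : ∀ t ∈ Ioo a b, t ≠ j → 0 < l * A t + m * B t) : False := by
  have aux : ∀ {y G : ℝ → ℝ}, ContinuousOn y (Icc a b) → ContinuousOn G (Icc a b) →
      (∀ t ∈ Icc a b, y t ≠ 0) →
      (∀ t ∈ Ioo a b, t ≠ j → HasDerivAt y (-(A t + B t * y t) / y t) t) →
      (∀ t ∈ Ioo a b, t ≠ j → HasDerivAt G (B t / y t) t) → y a = y b →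
      ∀ t ∈ Icc a b, l * y t - m ≠ 0 := by
    intro y G hy hG hy0 hyd hGd hyc
    refine linear_ne_zero (v := fun t => l * y t - m) (G := fun t => - G t)
      (g := fun t => -(B t / y t)) (h := fun t => -(l * A t + m * B t) / y t) (j := j)
      ((continuousOn_const.mul hy).sub continuousOn_const) hG.neg
      (fun t ht hj => (hGd t ht hj).neg) ?_ ?_ hab (by simp [hyc])
    · intro t ht hj
      refine (((hyd t ht hj).const_mul l).sub_const m).congr_deriv ?_
      have := hy0 t (Ioo_subset_Icc_self ht)
      field_simp
      ring
    · rcases const_sign ordConnected_Icc hy hy0 with h | h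
      · right
        intro t ht hj
        exact div_neg_of_neg_of_pos (neg_neg_of_pos (hC t ht hj)) (h t (Ioo_subset_Icc_self ht))
      · left
        intro t ht hj
        exact div_pos_of_neg_of_neg (neg_neg_of_pos (hC t ht hj)) (h t (Ioo_subset_Icc_self ht))
  have hvy := aux hy hG hy0 hyd hGd hyc
  have hvz := aux hz hH hz0 hzd hHd hzc
  have hT : ∃ T : ℝ → ℝ, ∀ s, l * s - m ≠ 0 → HasDerivAt T (s / (l * s - m)) s := by
    by_cases hl : l = 0
    · refine ⟨fun s => -(s ^ 2) / (2 * m), fun s hs => ?_⟩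
      refine (((hasDerivAt_pow 2 s).neg).div_const (2 * m)).congr_deriv ?_
      have hm : m ≠ 0 := by simpa [hl] using hs
      subst hl
      rw [zero_mul, zero_sub, eq_div_iff (neg_ne_zero.2 hm)]
      field_simp
      simp
    · refine ⟨fun s => s / l + m / l ^ 2 * Real.log (l * s - m), fun s hs => ?_⟩
      refine (((hasDerivAt_id s).div_const l).add
        (((((hasDerivAt_id s).const_mul l).sub_const m).log hs).const_mul (m / l ^ 2))).congr_deriv ?_
      simp only [id]
      field_simp
      ring
  obtain ⟨T, hT⟩ := hT
  have hTc : ∀ {y : ℝ → ℝ}, ContinuousOn y (Icc a b) → (∀ t ∈ Icc a b, l * y t - m ≠ 0) →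
      ContinuousOn (fun t => T (y t)) (Icc a b) := fun {y} hy hv t ht =>
    (hT _ (hv t ht)).continuousAt.comp_continuousWithinAt (hy t ht)
  set Q : ℝ → ℝ := fun t => (y t - z t) / ((l * y t - m) * (l * z t - m)) with hQ
  have hQc : ContinuousOn Q (Icc a b) := by
    refine (hy.sub hz).div (((continuousOn_const.mul hy).sub continuousOn_const).mul
      ((continuousOn_const.mul hz).sub continuousOn_const)) ?_
    intro t ht
    exact mul_ne_zero (hvy t ht) (hvz t ht)
  have hQ0 : ∀ t ∈ Icc a b, Q t ≠ 0 := fun t ht =>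
    div_ne_zero (hyz t ht) (mul_ne_zero (hvy t ht) (hvz t ht))
  have hKd : ∀ t ∈ Ioo a b, t ≠ j → HasDerivAt (fun t => T (y t) - T (z t))
      ((l * A t + m * B t) * Q t) t := by
    intro t ht hj
    have ht' := Ioo_subset_Icc_self ht
    refine (((hT _ (hvy t ht')).comp t (hyd t ht hj)).sub
      ((hT _ (hvz t ht')).comp t (hzd t ht hj))).congr_deriv ?_
    have h1 := hy0 t ht'
    have h2 := hz0 t ht'
    have h3 := hvy t ht'
    have h4 := hvz t ht'
    simp only [hQ]
    generalize hp : l * y t - m = p at h3 ⊢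
    generalize hq : l * z t - m = q at h4 ⊢
    field_simp
    linear_combination (A t + B t * y t) * hq - (A t + B t * z t) * hp
  have ha : a ∈ Icc a b := left_mem_Icc.2 hab.le
  have hb : b ∈ Icc a b := right_mem_Icc.2 hab.le
  rcases const_sign ordConnected_Icc hQc hQ0 with h | h
  · have := strictMonoOn_of_deriv_pos_off ((hTc hy hvy).sub (hTc hz hvz)) hKd
      (fun t ht hj => mul_pos (hC t ht hj) (h t (Ioo_subset_Icc_self ht))) ha hb hab
    simp [hyc, hzc] at this
  · have := strictMonoOn_of_deriv_pos_off ((hTc hy hvy).sub (hTc hz hvz)).neg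
      (fun t ht hj => (hKd t ht hj).neg)
      (fun t ht hj => neg_pos.2 (mul_neg_of_pos_of_neg (hC t ht hj)
        (h t (Ioo_subset_Icc_self ht)))) ha hb hab
    simp [hyc, hzc] at this

/-- A strictly increasing function, differentiable with positive derivative off `j`, has a continuous
inverse, differentiable with the expected derivative wherever it does not take the value `j`. -/
lemma exists_inverse {f f' : ℝ → ℝ} {a b j : ℝ} (hab : a < b)
    (hf : ContinuousOn f (Icc a b))
    (hd : ∀ t ∈ Ioo a b, t ≠ j → HasDerivAt f (f' t) t)
    (hp : ∀ t ∈ Ioo a b, t ≠ j → 0 < f' t) :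
    ∃ T : ℝ → ℝ, ContinuousOn T (Icc (f a) (f b)) ∧
      (∀ d ∈ Icc (f a) (f b), T d ∈ Icc a b ∧ f (T d) = d) ∧
      (∀ d ∈ Ioo (f a) (f b), T d ∈ Ioo a b) ∧ T (f a) = a ∧ T (f b) = b ∧
      ∀ d ∈ Ioo (f a) (f b), T d ≠ j → HasDerivAt T (f' (T d))⁻¹ d := by
  have hm := strictMonoOn_of_deriv_pos_off hf hd hp
  have ha : a ∈ Icc a b := left_mem_Icc.2 hab.le
  have hb : b ∈ Icc a b := right_mem_Icc.2 hab.le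
  have himg : f '' Icc a b = Icc (f a) (f b) := by
    apply Subset.antisymm
    · rintro _ ⟨t, ht, rfl⟩
      exact ⟨hm.monotoneOn ha ht ht.1, hm.monotoneOn ht hb ht.2⟩
    · exact intermediate_value_Icc hab.le hf
  have hinv : ∀ d : ℝ, ∃ t, d ∈ Icc (f a) (f b) → t ∈ Icc a b ∧ f t = d := by
    intro d
    by_cases h : d ∈ Icc (f a) (f b)
    · rw [← himg] at h
      obtain ⟨t, ht, h⟩ := h
      exact ⟨t, fun _ => ⟨ht, h⟩⟩
    · exact ⟨0, fun h' => absurd h' h⟩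
  choose T hT using hinv
  have hTm : StrictMonoOn T (Icc (f a) (f b)) := by
    intro c hc d hd hcd
    by_contra hcon
    push Not at hcon
    have := hm.monotoneOn (hT d hd).1 (hT c hc).1 hcon
    rw [(hT d hd).2, (hT c hc).2] at this
    linarith
  have hfab := hm ha hb hab
  have hTf : ∀ t ∈ Icc a b, T (f t) = t := by
    intro t ht
    have hft : f t ∈ Icc (f a) (f b) := himg ▸ mem_image_of_mem f ht
    exact hm.injOn (hT _ hft).1 ht (hT _ hft).2
  have hTimg : T '' Icc (f a) (f b) = Icc a b := by
    apply Subset.antisymm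
    · rintro _ ⟨d, hd, rfl⟩
      exact (hT d hd).1
    · intro t ht
      exact ⟨f t, himg ▸ mem_image_of_mem f ht, hTf t ht⟩
  have hTc : ContinuousOn T (Icc (f a) (f b)) := by
    have hcomp : IsCompact (Icc a b) := isCompact_Icc
    rw [continuousOn_iff_isClosed]
    intro s hs
    refine ⟨f '' (Icc a b ∩ s), ((hcomp.inter_right hs).image_of_continuousOn
      (hf.mono inter_subset_left)).isClosed, ?_⟩
    ext d
    constructor
    · rintro ⟨hds, hd⟩
      exact ⟨⟨T d, ⟨(hT d hd).1, hds⟩, (hT d hd).2⟩, hd⟩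
    · rintro ⟨⟨t, ⟨ht, hts⟩, rfl⟩, hd⟩
      refine ⟨?_, hd⟩
      simpa [hTf t ht] using hts
  have hTo : ∀ d ∈ Ioo (f a) (f b), T d ∈ Ioo a b := by
    intro d hd
    have h1 := hTm (left_mem_Icc.2 hfab.le) (Ioo_subset_Icc_self hd) hd.1
    have h2 := hTm (Ioo_subset_Icc_self hd) (right_mem_Icc.2 hfab.le) hd.2
    rw [hTf a ha] at h1
    rw [hTf b hb] at h2
    exact ⟨h1, h2⟩
  refine ⟨T, hTc, hT, hTo, hTf a ha, hTf b hb, ?_⟩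
  intro d hd' hj
  refine HasDerivAt.of_local_left_inverse
    (hTc.continuousAt (Icc_mem_nhds hd'.1 hd'.2)) (hd _ (hTo d hd') hj)
    (hp _ (hTo d hd') hj).ne' ?_
  filter_upwards [Icc_mem_nhds hd'.1 hd'.2] with c hc using (hT c hc).2

/-! ### Reciprocals of closed solutions, continued to `[0,2]` -/

lemma linear_eq_zero {v g : ℝ → ℝ} (hg : ContinuousOn g (Icc 0 1))
    (hv : ∀ t ∈ Icc (0:ℝ) 1, HasDerivWithinAt v (g t * v t) (Icc 0 1) t)
    {s : ℝ} (hs : s ∈ Icc (0:ℝ) 1) (h0 : v s = 0) : ∀ t ∈ Icc (0:ℝ) 1, v t = 0 := by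
  obtain ⟨G, -, hG⟩ := exists_primitive zero_le_one hg
  have hF : ∀ t ∈ Icc (0:ℝ) 1,
      HasDerivWithinAt (fun t => v t * Real.exp (-G t)) 0 (Icc 0 1) t := by
    intro t ht
    refine ((hv t ht).mul (hG t ht).neg.exp).congr_deriv ?_
    simp only [Pi.neg_apply]
    ring
  intro t ht
  have := Convex.norm_image_sub_le_of_norm_hasDerivWithin_le (C := 0) hF (by simp)
    (convex_Icc 0 1) hs ht
  simp only [h0, zero_mul, sub_zero, norm_le_zero_iff] at this
  exact (mul_eq_zero.1 this).resolve_right (Real.exp_pos _).ne'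

/-- The difference of two solutions solves a homogeneous linear equation, so solutions that meet
coincide. -/
lemma AbelSol.eq_of_eq {A B x z : ℝ → ℝ} (hA : Continuous A) (hB : Continuous B)
    (hx : AbelSol A B 1 x) (hz : AbelSol A B 1 z) {s : ℝ} (hs : s ∈ Icc (0:ℝ) 1)
    (h : x s = z s) : ∀ t ∈ Icc (0:ℝ) 1, x t = z t := by
  have hxc : ContinuousOn x (Icc 0 1) := fun t ht => (hx t ht).continuousWithinAt
  have hzc : ContinuousOn z (Icc 0 1) := fun t ht => (hz t ht).continuousWithinAt
  have := linear_eq_zero (v := fun t => x t - z t)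
    (g := fun t => A t * (x t ^ 2 + x t * z t + z t ^ 2) + B t * (x t + z t)) (by fun_prop)
    (fun t ht => ((hx t ht).sub (hz t ht)).congr_deriv (by ring)) hs (by simp [h])
  intro t ht
  exact sub_eq_zero.1 (this t ht)

lemma abelSol_zero (A B : ℝ → ℝ) : AbelSol A B 1 (fun _ => 0) := by
  intro t ht
  simpa using hasDerivWithinAt_const t (Icc (0:ℝ) 1) (0:ℝ)

/-- The extension of `f : [0,1] → ℝ` to `[0,2]` by the cocycle rule
`f (t + 1) = f 1 - f 0 + f t`. -/
def cocyc (f : ℝ → ℝ) (t : ℝ) : ℝ := f (min t 1) + (f (max t 1 - 1) - f 0)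

/-- The `1`-periodic extension of `f : [0,1] → ℝ` to `[0,2]`. -/
def per (f : ℝ → ℝ) (t : ℝ) : ℝ := if t ≤ 1 then f t else f (t - 1)

lemma per_of_le {f : ℝ → ℝ} {t : ℝ} (h : t ≤ 1) : per f t = f t := if_pos h

lemma per_of_gt {f : ℝ → ℝ} {t : ℝ} (h : 1 < t) : per f t = f (t - 1) := if_neg h.not_ge

lemma cocyc_of_le {f : ℝ → ℝ} {t : ℝ} (h : t ≤ 1) : cocyc f t = f t := by
  simp [cocyc, min_eq_left h, max_eq_right h]

lemma cocyc_of_ge {f : ℝ → ℝ} {t : ℝ} (h : 1 ≤ t) : cocyc f t = f (t - 1) + (f 1 - f 0) := by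
  simp only [cocyc, min_eq_right h, max_eq_left h]
  ring

lemma cocyc_eq_per {f : ℝ → ℝ} (h : f 0 = f 1) (t : ℝ) : cocyc f t = per f t := by
  rcases le_or_gt t 1 with ht | ht
  · rw [cocyc_of_le ht, per_of_le ht]
  · rw [cocyc_of_ge ht.le, per_of_gt ht, h]
    ring

lemma continuousOn_cocyc {f : ℝ → ℝ} (hf : ContinuousOn f (Icc 0 1)) :
    ContinuousOn (cocyc f) (Icc 0 2) := by
  refine ContinuousOn.add (hf.comp (by fun_prop) ?_)
    ((hf.comp (by fun_prop) ?_).sub continuousOn_const)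
  · intro t ht
    exact ⟨le_min ht.1 zero_le_one, min_le_right _ _⟩
  · intro t ht
    refine ⟨by linarith [le_max_right t 1], ?_⟩
    have : max t 1 ≤ 2 := max_le ht.2 (by norm_num)
    linarith

lemma hasDerivAt_cocyc {f f' : ℝ → ℝ}
    (hf : ∀ t ∈ Icc (0:ℝ) 1, HasDerivWithinAt f (f' t) (Icc 0 1) t)
    {t : ℝ} (ht : t ∈ Ioo (0:ℝ) 2) (h1 : t ≠ 1) : HasDerivAt (cocyc f) (per f' t) t := by
  have hf' : ∀ t ∈ Ioo (0:ℝ) 1, HasDerivAt f (f' t) t := fun t ht =>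
    (hf t (Ioo_subset_Icc_self ht)).hasDerivAt (Icc_mem_nhds ht.1 ht.2)
  rcases lt_or_gt_of_ne h1 with h | h
  · rw [per_of_le h.le]
    refine (hf' t ⟨ht.1, h⟩).congr_of_eventuallyEq ?_
    filter_upwards [Iio_mem_nhds h] with s hs using cocyc_of_le (le_of_lt hs)
  · rw [per_of_gt h]
    have h2 : HasDerivAt (fun s => f (s - 1) + (f 1 - f 0)) (f' (t - 1)) t :=
      ((hf' (t - 1) ⟨by linarith, by linarith [ht.2]⟩).comp_sub_const t 1).add_const _
    refine h2.congr_of_eventuallyEq ?_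
    filter_upwards [Ioi_mem_nhds h] with s hs using cocyc_of_ge (le_of_lt hs)

/-- `y` is the reciprocal of a closed nonvanishing solution, continued periodically to `[0,2]`;
`G` is a primitive of `B / y`.  At the junction `t = 1` no derivative is required. -/
structure RecSol (A B y G : ℝ → ℝ) : Prop where
  cont : ContinuousOn y (Icc 0 2)
  contG : ContinuousOn G (Icc 0 2)
  ne_zero : ∀ t ∈ Icc (0:ℝ) 2, y t ≠ 0
  deriv : ∀ t ∈ Ioo (0:ℝ) 2, t ≠ 1 →
    HasDerivAt y (-(per A t + per B t * y t) / y t) t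
  derivG : ∀ t ∈ Ioo (0:ℝ) 2, t ≠ 1 → HasDerivAt G (per B t / y t) t
  periodic : ∀ t ∈ Icc (0:ℝ) 1, y (1 + t) = y t

lemma ClosedSol.exists_recSol {A B x : ℝ → ℝ} (hA : Continuous A) (hB : Continuous B)
    (hx : ClosedSol A B 1 x) (h0 : x 0 ≠ 0) :
    ∃ y G, RecSol A B y G ∧ ∀ t ∈ Icc (0:ℝ) 1, y t = (x t)⁻¹ := by
  have hne : ∀ t ∈ Icc (0:ℝ) 1, x t ≠ 0 := fun t ht h =>
    h0 (hx.1.eq_of_eq hA hB (abelSol_zero A B) ht h 0 (by simp))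
  have hxc : ContinuousOn x (Icc 0 1) := fun t ht => (hx.1 t ht).continuousWithinAt
  set f : ℝ → ℝ := fun t => (x t)⁻¹ with hf
  have hfne : ∀ t ∈ Icc (0:ℝ) 1, f t ≠ 0 := fun t ht => inv_ne_zero (hne t ht)
  have hfc : ContinuousOn f (Icc 0 1) := hxc.inv₀ hne
  have hfd : ∀ t ∈ Icc (0:ℝ) 1,
      HasDerivWithinAt f (-(A t + B t * f t) / f t) (Icc 0 1) t := by
    intro t ht
    refine ((hx.1 t ht).inv (hne t ht)).congr_deriv ?_
    have := hne t ht
    simp only [hf]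
    field_simp
  have hf01 : f 0 = f 1 := by simp only [hf, hx.2]
  obtain ⟨G, hGc, hG⟩ := exists_primitive zero_le_one
    (g := fun t => B t / f t) (hB.continuousOn.div hfc hfne)
  have hp : ∀ t ∈ Icc (0:ℝ) 2, ∃ s ∈ Icc (0:ℝ) 1, ∀ g : ℝ → ℝ, per g t = g s := by
    intro t ht
    rcases le_or_gt t 1 with h | h
    · exact ⟨t, ⟨ht.1, h⟩, fun g => per_of_le h⟩
    · exact ⟨t - 1, ⟨by linarith, by linarith [ht.2]⟩, fun g => per_of_gt h⟩
  refine ⟨cocyc f, cocyc G, ⟨continuousOn_cocyc hfc, continuousOn_cocyc hGc.continuousOn, ?_, ?_, ?_, ?_⟩,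
    fun t ht => cocyc_of_le ht.2⟩
  · intro t ht
    obtain ⟨s, hs, h⟩ := hp t ht
    rw [cocyc_eq_per hf01, h]
    exact hfne s hs
  · intro t ht h1
    refine (hasDerivAt_cocyc hfd ht h1).congr_deriv ?_
    obtain ⟨s, hs, h⟩ := hp t (Ioo_subset_Icc_self ht)
    simp only [cocyc_eq_per hf01, h]
  · intro t ht h1
    refine (hasDerivAt_cocyc hG ht h1).congr_deriv ?_
    obtain ⟨s, hs, h⟩ := hp t (Ioo_subset_Icc_self ht)
    simp only [cocyc_eq_per hf01, h]
  · intro t ht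
    rw [cocyc_of_le ht.2, cocyc_of_ge (by linarith [ht.1]), hf01]
    simp

lemma recSol_sub_ne_zero {A B x x' y y' G G' : ℝ → ℝ} (hA : Continuous A) (hB : Continuous B)
    (hx : AbelSol A B 1 x) (hx' : AbelSol A B 1 x') (hne : x 0 ≠ x' 0)
    (hy : RecSol A B y G) (hy' : RecSol A B y' G')
    (e : ∀ t ∈ Icc (0:ℝ) 1, y t = (x t)⁻¹) (e' : ∀ t ∈ Icc (0:ℝ) 1, y' t = (x' t)⁻¹) :
    ∀ t ∈ Icc (0:ℝ) 2, y t - y' t ≠ 0 := by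
  have key : ∀ t ∈ Icc (0:ℝ) 1, y t - y' t ≠ 0 := by
    intro t ht h
    rw [sub_eq_zero, e t ht, e' t ht, inv_inj] at h
    exact hne (hx.eq_of_eq hA hB hx' ht h 0 (by simp))
  intro t ht
  rcases le_or_gt t 1 with h | h
  · exact key t ⟨ht.1, h⟩
  · have hs : t - 1 ∈ Icc (0:ℝ) 1 := ⟨by linarith, by linarith [ht.2]⟩
    have h1 := hy.periodic _ hs
    have h2 := hy'.periodic _ hs
    rw [add_sub_cancel] at h1 h2
    rw [h1, h2]
    exact key _ hs

/-- `pair_not_closed` on a subinterval of `[0,2]`, for a combination of either sign. -/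
lemma RecSol.pair_false {A B y z G H : ℝ → ℝ} (hy : RecSol A B y G) (hz : RecSol A B z H)
    (hyz : ∀ t ∈ Icc (0:ℝ) 2, y t - z t ≠ 0) {a b l m : ℝ} (ha : 0 ≤ a) (hab : a < b)
    (hb : b ≤ 2) (hya : y a = y b) (hza : z a = z b)
    (hC : (∀ t ∈ Ioo a b, t ≠ 1 → 0 < l * per A t + m * per B t) ∨
      (∀ t ∈ Ioo a b, t ≠ 1 → l * per A t + m * per B t < 0)) : False := by
  have hI : Icc a b ⊆ Icc 0 2 := Icc_subset_Icc ha hb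
  have hO : Ioo a b ⊆ Ioo 0 2 := Ioo_subset_Ioo ha hb
  have main : ∀ l m : ℝ, ¬ (∀ t ∈ Ioo a b, t ≠ 1 → 0 < l * per A t + m * per B t) :=
    fun l m h => pair_not_closed (A := per A) (B := per B) hab (hy.cont.mono hI) (hz.cont.mono hI)
      (hy.contG.mono hI) (hz.contG.mono hI) (fun t ht => hy.ne_zero t (hI ht))
      (fun t ht => hz.ne_zero t (hI ht)) (fun t ht => hyz t (hI ht))
      (fun t ht => hy.deriv t (hO ht)) (fun t ht => hz.deriv t (hO ht))
      (fun t ht => hy.derivG t (hO ht)) (fun t ht => hz.derivG t (hO ht)) hya hza h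
  rcases hC with h | h
  · exact main l m h
  · exact main (-l) (-m) fun t ht h1 => by linarith [h t ht h1]

/-! ### Signs of quadratic polynomials on the circle -/

lemma quad_factor {c₀ c₁ c₂ r : ℝ} (hr : c₀ + c₁ * r + c₂ * r ^ 2 = 0) (t : ℝ) :
    c₀ + c₁ * t + c₂ * t ^ 2 = (t - r) * (c₂ * t + (c₁ + c₂ * r)) := by
  linear_combination hr

lemma affine_sign_or_root (α β p q : ℝ) :
    (∀ t ∈ Ioo p q, 0 < α * t + β) ∨ (∀ t ∈ Ioo p q, α * t + β < 0) ∨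
      ∃ r ∈ Ioo p q, ∀ t, α * t + β = α * (t - r) := by
  by_cases h : ∃ r ∈ Ioo p q, α * r + β = 0
  · obtain ⟨r, hr, h⟩ := h
    exact Or.inr (Or.inr ⟨r, hr, fun t => by linear_combination h⟩)
  · push Not at h
    have := const_sign (f := fun t => α * t + β) ordConnected_Ioo (by fun_prop) h
    tauto

/-- Sign pattern of a nonzero quadratic polynomial on the circle `[0,1]/0∼1`: either it has a
strict sign off one point, or it has one sign on an arc and the opposite one on the other arc. -/
lemma quad_sign {c₀ c₁ c₂ : ℝ} {q : ℝ → ℝ} (hq : ∀ t, q t = c₀ + c₁ * t + c₂ * t ^ 2)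
    (h0 : ∃ t, q t ≠ 0) :
    (∃ j, (∀ t ∈ Ioo (0:ℝ) 1, t ≠ j → 0 < q t) ∨ (∀ t ∈ Ioo (0:ℝ) 1, t ≠ j → q t < 0)) ∨
    ∃ τ₁ τ₂ : ℝ, 0 ≤ τ₁ ∧ τ₁ < τ₂ ∧ τ₂ ≤ 1 ∧ τ₂ < 1 + τ₁ ∧
      (((∀ t ∈ Ioo τ₁ τ₂, 0 < q t) ∧ (∀ t ∈ Ioo 0 τ₁, q t < 0) ∧ ∀ t ∈ Ioo τ₂ 1, q t < 0) ∨
       ((∀ t ∈ Ioo τ₁ τ₂, q t < 0) ∧ (∀ t ∈ Ioo 0 τ₁, 0 < q t) ∧ ∀ t ∈ Ioo τ₂ 1, 0 < q t)) := by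
  by_cases hr : ∃ r ∈ Ioo (0:ℝ) 1, q r = 0
  swap
  · push Not at hr
    left
    refine ⟨2, ?_⟩
    have hc : Continuous q := by
      have : q = fun t => c₀ + c₁ * t + c₂ * t ^ 2 := funext hq
      rw [this]; fun_prop
    rcases const_sign ordConnected_Ioo hc.continuousOn hr with h | h
    · exact Or.inl fun t ht _ => h t ht
    · exact Or.inr fun t ht _ => h t ht
  obtain ⟨r, hr, hr0⟩ := hr
  rw [hq] at hr0
  have hf : ∀ t, q t = (t - r) * (c₂ * t + (c₁ + c₂ * r)) := fun t => by
    rw [hq, quad_factor hr0]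
  rcases affine_sign_or_root c₂ (c₁ + c₂ * r) 0 1 with h | h | ⟨r', hr', h⟩
  · right
    refine ⟨r, 1, hr.1.le, hr.2, le_rfl, by linarith [hr.1], Or.inl ⟨?_, ?_, by simp⟩⟩
    · intro t ht
      rw [hf]
      exact mul_pos (by linarith [ht.1]) (h t ⟨hr.1.trans ht.1, ht.2⟩)
    · intro t ht
      rw [hf]
      exact mul_neg_of_neg_of_pos (by linarith [ht.2]) (h t ⟨ht.1, ht.2.trans hr.2⟩)
  · right
    refine ⟨r, 1, hr.1.le, hr.2, le_rfl, by linarith [hr.1], Or.inr ⟨?_, ?_, by simp⟩⟩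
    · intro t ht
      rw [hf]
      exact mul_neg_of_pos_of_neg (by linarith [ht.1]) (h t ⟨hr.1.trans ht.1, ht.2⟩)
    · intro t ht
      rw [hf]
      exact mul_pos_of_neg_of_neg (by linarith [ht.2]) (h t ⟨ht.1, ht.2.trans hr.2⟩)
  have hf' : ∀ t, q t = c₂ * ((t - r) * (t - r')) := fun t => by rw [hf, h]; ring
  have hc : c₂ ≠ 0 := by
    rintro rfl
    obtain ⟨t, ht⟩ := h0
    exact ht (by simp [hf'])
  rcases eq_or_ne r r' with rfl | hne
  · left
    refine ⟨r, ?_⟩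
    have hsq : ∀ t, t ≠ r → 0 < (t - r) * (t - r) := fun t ht =>
      mul_self_pos.2 (sub_ne_zero.2 ht)
    rcases lt_or_gt_of_ne hc with hc | hc
    · right
      intro t ht h1
      rw [hf']
      exact mul_neg_of_neg_of_pos hc (hsq t h1)
    · left
      intro t ht h1
      rw [hf']
      exact mul_pos hc (hsq t h1)
  · right
    have key : ∃ τ₁ τ₂ : ℝ, 0 < τ₁ ∧ τ₁ < τ₂ ∧ τ₂ < 1 ∧ ∀ t, q t = c₂ * ((t - τ₁) * (t - τ₂)) := by
      rcases lt_or_gt_of_ne hne with h | h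
      · exact ⟨r, r', hr.1, h, hr'.2, hf'⟩
      · exact ⟨r', r, hr'.1, h, hr.2, fun t => by rw [hf']; ring⟩
    obtain ⟨τ₁, τ₂, h1, h2, h3, h4⟩ := key
    have i1 : ∀ t ∈ Ioo τ₁ τ₂, (t - τ₁) * (t - τ₂) < 0 := fun t ht =>
      mul_neg_of_pos_of_neg (by linarith [ht.1]) (by linarith [ht.2])
    have i2 : ∀ t ∈ Ioo 0 τ₁, 0 < (t - τ₁) * (t - τ₂) := fun t ht =>
      mul_pos_of_neg_of_neg (by linarith [ht.2]) (by linarith [ht.2])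
    have i3 : ∀ t ∈ Ioo τ₂ 1, 0 < (t - τ₁) * (t - τ₂) := fun t ht =>
      mul_pos (by linarith [ht.1]) (by linarith [ht.1])
    refine ⟨τ₁, τ₂, h1.le, h2, h3.le, by linarith, ?_⟩
    simp only [h4]
    rcases lt_or_gt_of_ne hc with hc | hc
    · exact Or.inl ⟨fun t ht => mul_pos_of_neg_of_neg hc (i1 t ht),
        fun t ht => mul_neg_of_neg_of_pos hc (i2 t ht),
        fun t ht => mul_neg_of_neg_of_pos hc (i3 t ht)⟩
    · exact Or.inr ⟨fun t ht => mul_neg_of_pos_of_neg hc (i1 t ht),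
        fun t ht => mul_pos hc (i2 t ht), fun t ht => mul_pos hc (i3 t ht)⟩

/-- Two closed solutions cannot return simultaneously to their values at time `s` before a full
period has elapsed. Some nontrivial `l A + m B` vanishes at `s`; it has at most one further root, so
it keeps a strict sign on one of the two arcs into which `s` and `s'` cut the circle, and
`pair_not_closed` applies on that arc. -/
lemma RecSol.no_return {a₀ a₁ a₂ b₀ b₁ b₂ : ℝ} {A B y z G H : ℝ → ℝ}
    (hA : ∀ t, A t = a₀ + a₁ * t + a₂ * t ^ 2) (hB : ∀ t, B t = b₀ + b₁ * t + b₂ * t ^ 2)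
    (hind : ∀ l m : ℝ, (∀ t, l * A t + m * B t = 0) → l = 0 ∧ m = 0)
    (hy : RecSol A B y G) (hz : RecSol A B z H)
    (hyz : ∀ t ∈ Icc (0:ℝ) 2, y t - z t ≠ 0) {s s' : ℝ} (hs : s ∈ Ioo (0:ℝ) 1)
    (hs' : s' ∈ Ioo s (1 + s)) (ey : y s = y s') (ez : z s = z s') : False := by
  obtain ⟨l, m, hlm, hroot⟩ : ∃ l m : ℝ, ¬ (l = 0 ∧ m = 0) ∧ l * A s + m * B s = 0 := by
    by_cases h : A s = 0
    · exact ⟨1, 0, by simp, by simp [h]⟩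
    · exact ⟨B s, -A s, by simp [h], by ring⟩
  obtain ⟨α, β, hf⟩ : ∃ α β : ℝ, ∀ t, l * A t + m * B t = (t - s) * (α * t + β) := by
    refine ⟨l * a₂ + m * b₂, (l * a₁ + m * b₁) + (l * a₂ + m * b₂) * s, fun t => ?_⟩
    rw [← quad_factor (c₀ := l * a₀ + m * b₀), hA, hB]
    · ring
    · rw [← hroot, hA, hB]; ring
  have hα : ∀ r, (∀ t, α * t + β = α * (t - r)) → α ≠ 0 := by
    rintro r hr rfl
    exact hlm (hind l m fun t => by rw [hf, hr]; ring)
  have hP : ∀ t, l * per A t + m * per B t =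
      if t ≤ 1 then (t - s) * (α * t + β) else (t - 1 - s) * (α * (t - 1) + β) := by
    intro t
    unfold per
    split_ifs <;> exact hf _
  have ey' : y s' = y (1 + s) := by rw [hy.periodic s (Ioo_subset_Icc_self hs), ey]
  have ez' : z s' = z (1 + s) := by rw [hz.periodic s (Ioo_subset_Icc_self hs), ez]
  have inner := hy.pair_false hz hyz (l := l) (m := m) hs.1.le hs'.1 (by linarith [hs'.2, hs.2]) ey ez
  have outer := hy.pair_false hz hyz (l := l) (m := m) (by linarith [hs'.1, hs.1]) hs'.2
    (by linarith [hs.2]) ey' ez'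
  have sign_of_eq_mul : α ≠ 0 → ∀ I : Set ℝ, (∀ t ∈ I, t ≠ 1 → ∃ k > 0,
      l * per A t + m * per B t = k * α) → 
      (∀ t ∈ I, t ≠ 1 → 0 < l * per A t + m * per B t) ∨
      (∀ t ∈ I, t ≠ 1 → l * per A t + m * per B t < 0) := by
    intro hα I h
    rcases lt_or_gt_of_ne hα with hα | hα
    · right
      intro t ht h1
      obtain ⟨k, hk, e⟩ := h t ht h1
      rw [e]; exact mul_neg_of_pos_of_neg hk hα
    · left
      intro t ht h1
      obtain ⟨k, hk, e⟩ := h t ht h1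
      rw [e]; exact mul_pos hk hα
  -- the factor `α t + β` has at most one root, which misses one of the two arcs between `s` and `s'`
  rcases le_or_gt s' 1 with h1 | h1
  · rcases affine_sign_or_root α β s s' with h | h | ⟨r, hr, h⟩
    · refine inner (Or.inl fun t ht _ => ?_)
      rw [hP, if_pos (ht.2.le.trans h1)]
      exact mul_pos (by linarith [ht.1]) (h t ht)
    · refine inner (Or.inr fun t ht _ => ?_)
      rw [hP, if_pos (ht.2.le.trans h1)]
      exact mul_neg_of_pos_of_neg (by linarith [ht.1]) (h t ht)
    · refine outer (sign_of_eq_mul (hα r h) _ fun t ht ht1 => ?_)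
      rcases lt_or_gt_of_ne ht1 with ht1 | ht1
      · refine ⟨(t - s) * (t - r), mul_pos ?_ ?_, ?_⟩
        · linarith [ht.1, hs'.1]
        · linarith [ht.1, hr.2]
        · rw [hP, if_pos ht1.le, h]; ring
      · refine ⟨(t - 1 - s) * (t - 1 - r), mul_pos_of_neg_of_neg ?_ ?_, ?_⟩
        · linarith [ht.2]
        · linarith [ht.2, hr.1]
        · rw [hP, if_neg ht1.not_ge, h]; ring
  · rcases affine_sign_or_root α β (s' - 1) s with h | h | ⟨r, hr, h⟩
    · refine outer (Or.inr fun t ht _ => ?_)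
      rw [hP, if_neg (h1.trans ht.1).not_ge]
      exact mul_neg_of_neg_of_pos (by linarith [ht.2])
        (h _ ⟨by linarith [ht.1], by linarith [ht.2]⟩)
    · refine outer (Or.inl fun t ht _ => ?_)
      rw [hP, if_neg (h1.trans ht.1).not_ge]
      exact mul_pos_of_neg_of_neg (by linarith [ht.2])
        (h _ ⟨by linarith [ht.1], by linarith [ht.2]⟩)
    · refine inner (sign_of_eq_mul (hα r h) _ fun t ht ht1 => ?_)
      rcases lt_or_gt_of_ne ht1 with ht1 | ht1
      · refine ⟨(t - s) * (t - r), mul_pos ?_ ?_, ?_⟩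
        · linarith [ht.1]
        · linarith [ht.1, hr.2]
        · rw [hP, if_pos ht1.le, h]; ring
      · refine ⟨(t - 1 - s) * (t - 1 - r), mul_pos_of_neg_of_neg ?_ ?_, ?_⟩
        · linarith [ht.2, hs'.2]
        · linarith [ht.2, hr.1]
        · rw [hP, if_neg ht1.not_ge, h]; ring

/-! ### Three nonzero closed solutions cannot coexist -/

/-- The difference `f = σ (y₁ - y₃)` increases on the arc `[τ₁, τ₂]` and decreases on the arc
`[τ₂, 1 + τ₁]`, so it serves as a parameter `d` on both, with inverses `T₁` and `T₂`. The ratio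
`u = (y₁ - y₂) / (y₁ - y₃)` satisfies `du/dd = -σ u (1 - u) / y₂` on either arc, whence
`w = u ∘ T₂ - u ∘ T₁` solves a linear equation `w' = g w + h`, where
`h = σ u (1 - u) (y₁ ∘ T₂ - y₁ ∘ T₁) / (y₂ ∘ T₁ * y₂ ∘ T₂)` with `u` taken along `T₁`. By
`RecSol.no_return`, `h` does not vanish inside, although `w` vanishes at both ends. -/
lemma RecSol.three_false_of_arcs {a₀ a₁ a₂ b₀ b₁ b₂ : ℝ} {A B y₁ y₂ y₃ G₁ G₂ G₃ : ℝ → ℝ}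
    (hA : ∀ t, A t = a₀ + a₁ * t + a₂ * t ^ 2) (hB : ∀ t, B t = b₀ + b₁ * t + b₂ * t ^ 2)
    (hind : ∀ l m : ℝ, (∀ t, l * A t + m * B t = 0) → l = 0 ∧ m = 0)
    (h₁ : RecSol A B y₁ G₁) (h₂ : RecSol A B y₂ G₂) (h₃ : RecSol A B y₃ G₃)
    (h₁₂ : ∀ t ∈ Icc (0:ℝ) 2, y₁ t - y₂ t ≠ 0) (h₁₃ : ∀ t ∈ Icc (0:ℝ) 2, y₁ t - y₃ t ≠ 0)
    (h₂₃ : ∀ t ∈ Icc (0:ℝ) 2, y₂ t - y₃ t ≠ 0)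
    {τ₁ τ₂ σ : ℝ} (hτ₁ : 0 ≤ τ₁) (hτ : τ₁ < τ₂) (hτ₂ : τ₂ ≤ 1) (hτ' : τ₂ < 1 + τ₁)
    (hσ : σ * σ = 1)
    (hup : ∀ t ∈ Ioo τ₁ τ₂, 0 < σ * (per A t * ((y₁ t - y₃ t) / (y₁ t * y₃ t))))
    (hdown : ∀ t ∈ Ioo τ₂ (1 + τ₁), t ≠ 1 →
      σ * (per A t * ((y₁ t - y₃ t) / (y₁ t * y₃ t))) < 0) : False := by
  set f : ℝ → ℝ := fun t => σ * (y₁ t - y₃ t) with hf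
  set f' : ℝ → ℝ := fun t => σ * (per A t * ((y₁ t - y₃ t) / (y₁ t * y₃ t))) with hf'
  have hσ0 : σ ≠ 0 := by rintro rfl; simp at hσ
  have hfc : ContinuousOn f (Icc 0 2) := continuousOn_const.mul (h₁.cont.sub h₃.cont)
  have hfd : ∀ t ∈ Ioo (0:ℝ) 2, t ≠ 1 → HasDerivAt f (f' t) t := by
    intro t ht h1
    refine (((h₁.deriv t ht h1).sub (h₃.deriv t ht h1)).const_mul σ).congr_deriv ?_
    have i1 := h₁.ne_zero t (Ioo_subset_Icc_self ht)
    have i3 := h₃.ne_zero t (Ioo_subset_Icc_self ht)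
    simp only [hf']
    field_simp
    ring
  set u : ℝ → ℝ := fun t => (y₁ t - y₂ t) / (y₁ t - y₃ t) with hu
  have huc : ContinuousOn u (Icc 0 2) := (h₁.cont.sub h₂.cont).div (h₁.cont.sub h₃.cont) h₁₃
  have hu0 : ∀ t ∈ Icc (0:ℝ) 2, u t ≠ 0 := fun t ht => div_ne_zero (h₁₂ t ht) (h₁₃ t ht)
  have hu1 : ∀ t ∈ Icc (0:ℝ) 2, 1 - u t ≠ 0 := by
    intro t ht
    have : 1 - u t = (y₂ t - y₃ t) / (y₁ t - y₃ t) := by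
      have := h₁₃ t ht
      simp only [hu]
      field_simp
      ring
    rw [this]
    exact div_ne_zero (h₂₃ t ht) (h₁₃ t ht)
  -- in the variable `f`, the ratio `u` obeys an equation free of the coefficients `A` and `B`
  have hud : ∀ t ∈ Ioo (0:ℝ) 2, t ≠ 1 →
      HasDerivAt u (f' t * (-σ * (u t * (1 - u t) / y₂ t))) t := by
    intro t ht h1
    have ht' := Ioo_subset_Icc_self ht
    have i1 := h₁.ne_zero t ht'
    have i2 := h₂.ne_zero t ht'
    have i3 := h₃.ne_zero t ht'
    have i13 := h₁₃ t ht'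
    refine (((h₁.deriv t ht h1).sub (h₂.deriv t ht h1)).div
      ((h₁.deriv t ht h1).sub (h₃.deriv t ht h1)) i13).congr_deriv ?_
    have e : ∀ c : ℝ, σ * c * (-σ * (u t * (1 - u t) / y₂ t)) =
        -(c * (u t * (1 - u t) / y₂ t)) := fun c => by
      linear_combination -(c * (u t * (1 - u t) / y₂ t)) * hσ
    simp only [hf']
    rw [e]
    simp only [hu, Pi.sub_apply]
    field_simp
    ring
  have hyu : ∀ t ∈ Icc (0:ℝ) 2, y₂ t = y₁ t - u t * (σ * f t) := by
    intro t ht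
    have i13 := h₁₃ t ht
    have : σ * f t = y₁ t - y₃ t := by
      simp only [hf]
      linear_combination (y₁ t - y₃ t) * hσ
    rw [this]
    simp only [hu]
    field_simp
    ring
  have hτ₁m : τ₁ ∈ Icc (0:ℝ) 1 := ⟨hτ₁, by linarith⟩
  have p1 := h₁.periodic τ₁ hτ₁m
  have p2 := h₂.periodic τ₁ hτ₁m
  have p3 := h₃.periodic τ₁ hτ₁m
  have hI1 : Icc τ₁ τ₂ ⊆ Icc 0 2 := Icc_subset_Icc hτ₁ (by linarith)
  have hO1 : Ioo τ₁ τ₂ ⊆ Ioo 0 2 := Ioo_subset_Ioo hτ₁ (by linarith)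
  have hI2 : Icc τ₂ (1 + τ₁) ⊆ Icc 0 2 := Icc_subset_Icc (by linarith) (by linarith)
  have hO2 : Ioo τ₂ (1 + τ₁) ⊆ Ioo 0 2 := Ioo_subset_Ioo (by linarith) (by linarith)
  obtain ⟨T₁, T₁c, T₁m, T₁o, T₁a, T₁b, T₁d⟩ := exists_inverse (j := 1) hτ (hfc.mono hI1)
    (fun t ht => hfd t (hO1 ht)) (fun t ht _ => hup t ht)
  obtain ⟨S, Sc, Sm, So, Sa, Sb, Sd⟩ := exists_inverse (f := fun t => - f t)
    (f' := fun t => - f' t) (j := 1) hτ' (hfc.mono hI2).neg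
    (fun t ht h1 => (hfd t (hO2 ht) h1).neg) (fun t ht h1 => neg_pos.2 (hdown t ht h1))
  have hfper : f (1 + τ₁) = f τ₁ := by simp only [hf, p1, p3]
  rw [hfper] at Sc Sm So Sb Sd
  set α := f τ₁ with hα
  set β := f τ₂ with hβ
  have hαβ : α < β := strictMonoOn_of_deriv_pos_off (j := 1) (hfc.mono hI1)
    (fun t ht => hfd t (hO1 ht)) (fun t ht _ => hup t ht) (left_mem_Icc.2 hτ.le)
    (right_mem_Icc.2 hτ.le) hτ
  set T₂ : ℝ → ℝ := fun d => S (-d) with hT₂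
  have T₂c : ContinuousOn T₂ (Icc α β) := Sc.comp continuousOn_neg
    fun d hd => ⟨neg_le_neg hd.2, neg_le_neg hd.1⟩
  have T₂m : ∀ d ∈ Icc α β, T₂ d ∈ Icc τ₂ (1 + τ₁) ∧ f (T₂ d) = d := fun d hd =>
    ⟨(Sm (-d) ⟨neg_le_neg hd.2, neg_le_neg hd.1⟩).1,
      neg_injective (Sm (-d) ⟨neg_le_neg hd.2, neg_le_neg hd.1⟩).2⟩
  have T₂o : ∀ d ∈ Ioo α β, T₂ d ∈ Ioo τ₂ (1 + τ₁) := fun d hd =>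
    So (-d) ⟨neg_lt_neg hd.2, neg_lt_neg hd.1⟩
  have T₂d : ∀ d ∈ Ioo α β, T₂ d ≠ 1 → HasDerivAt T₂ (f' (T₂ d))⁻¹ d := by
    intro d hd h1
    have := (Sd (-d) ⟨neg_lt_neg hd.2, neg_lt_neg hd.1⟩ h1).scomp d (hasDerivAt_neg d)
    refine this.congr_deriv ?_
    simp [hT₂, inv_neg]
  set U₁ : ℝ → ℝ := fun d => u (T₁ d) with hU₁
  set U₂ : ℝ → ℝ := fun d => u (T₂ d) with hU₂
  set Y₁ : ℝ → ℝ := fun d => y₁ (T₁ d) with hY₁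
  set Y₂ : ℝ → ℝ := fun d => y₁ (T₂ d) with hY₂
  set R₁ : ℝ → ℝ := fun d => y₂ (T₁ d) with hR₁
  set R₂ : ℝ → ℝ := fun d => y₂ (T₂ d) with hR₂
  have M1 : MapsTo T₁ (Icc α β) (Icc 0 2) := fun d hd => hI1 (T₁m d hd).1
  have M2 : MapsTo T₂ (Icc α β) (Icc 0 2) := fun d hd => hI2 (T₂m d hd).1
  have U₁c : ContinuousOn U₁ (Icc α β) := huc.comp T₁c M1
  have U₂c : ContinuousOn U₂ (Icc α β) := huc.comp T₂c M2
  have Y₁c : ContinuousOn Y₁ (Icc α β) := h₁.cont.comp T₁c M1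
  have Y₂c : ContinuousOn Y₂ (Icc α β) := h₁.cont.comp T₂c M2
  have R₁c : ContinuousOn R₁ (Icc α β) := h₂.cont.comp T₁c M1
  have R₂c : ContinuousOn R₂ (Icc α β) := h₂.cont.comp T₂c M2
  have R0 : ∀ d ∈ Icc α β, R₁ d * R₂ d ≠ 0 := fun d hd =>
    mul_ne_zero (h₂.ne_zero _ (M1 hd)) (h₂.ne_zero _ (M2 hd))
  have U₁d : ∀ d ∈ Ioo α β, HasDerivAt U₁ (-σ * (U₁ d * (1 - U₁ d) / R₁ d)) d := by
    intro d hd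
    have ht := T₁o d hd
    have h1 : T₁ d ≠ 1 := (ht.2.trans_le hτ₂).ne
    have hne : f' (T₁ d) ≠ 0 := (hup _ ht).ne'
    refine ((hud _ (hO1 ht) h1).comp d (T₁d d hd h1)).congr_deriv ?_
    simp only [hU₁, hR₁]
    rw [mul_comm, inv_mul_cancel_left₀ hne]
  have U₂d : ∀ d ∈ Ioo α β, d ≠ f 1 → HasDerivAt U₂ (-σ * (U₂ d * (1 - U₂ d) / R₂ d)) d := by
    intro d hd hd1
    have ht := T₂o d hd
    have h1 : T₂ d ≠ 1 := fun h => hd1 (by rw [← h, (T₂m d (Ioo_subset_Icc_self hd)).2])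
    have hne : f' (T₂ d) ≠ 0 := (hdown _ ht h1).ne
    refine ((hud _ (hO2 ht) h1).comp d (T₂d d hd h1)).congr_deriv ?_
    simp only [hU₂, hR₂]
    rw [mul_comm, inv_mul_cancel_left₀ hne]
  have eR₁ : ∀ d ∈ Icc α β, R₁ d = Y₁ d - U₁ d * (σ * d) := by
    intro d hd
    have := hyu _ (M1 hd)
    rwa [(T₁m d hd).2] at this
  have eR₂ : ∀ d ∈ Icc α β, R₂ d = Y₂ d - U₂ d * (σ * d) := by
    intro d hd
    have := hyu _ (M2 hd)
    rwa [(T₂m d hd).2] at this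
  have hY : ∀ d ∈ Ioo α β, Y₂ d - Y₁ d ≠ 0 := by
    intro d hd h
    have h1 := T₁o d hd
    have h2 := T₂o d hd
    have e1 : y₁ (T₁ d) = y₁ (T₂ d) := (sub_eq_zero.1 h).symm
    have e2 : f (T₁ d) = f (T₂ d) := by
      rw [(T₁m d (Ioo_subset_Icc_self hd)).2, (T₂m d (Ioo_subset_Icc_self hd)).2]
    have e3 : y₁ (T₁ d) - y₃ (T₁ d) = y₁ (T₂ d) - y₃ (T₂ d) := mul_left_cancel₀ hσ0 e2
    exact h₁.no_return hA hB hind h₃ h₁₃ (s := T₁ d) (s' := T₂ d)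
      ⟨hτ₁.trans_lt h1.1, h1.2.trans_le hτ₂⟩
      ⟨h1.2.trans h2.1, by linarith [h2.2, h1.1]⟩ e1 (by linarith)
  set g : ℝ → ℝ := fun d =>
    σ * ((U₁ d + U₂ d - 1) * Y₁ d - σ * d * (U₁ d * U₂ d)) / (R₁ d * R₂ d) with hg
  set h : ℝ → ℝ := fun d =>
    σ * (U₁ d * (1 - U₁ d) * (Y₂ d - Y₁ d)) / (R₁ d * R₂ d) with hh
  have gc : ContinuousOn g (Icc α β) := ContinuousOn.div (by fun_prop) (R₁c.mul R₂c) R0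
  have hc : ContinuousOn h (Icc α β) := ContinuousOn.div (by fun_prop) (R₁c.mul R₂c) R0
  have h0 : ∀ d ∈ Ioo α β, h d ≠ 0 := by
    intro d hd
    have hd' := Ioo_subset_Icc_self hd
    exact div_ne_zero (mul_ne_zero hσ0 (mul_ne_zero (mul_ne_zero (hu0 _ (M1 hd')) (hu1 _ (M1 hd')))
      (hY d hd))) (R0 d hd')
  obtain ⟨Γ, Γc, Γd⟩ := exists_primitive hαβ.le gc
  have hsign := const_sign ordConnected_Ioo (hc.mono Ioo_subset_Icc_self) h0
  have := linear_ne_zero (v := fun d => U₂ d - U₁ d) (g := g) (h := h) (G := Γ) (j := f 1)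
    (U₂c.sub U₁c) Γc.continuousOn
    (fun d hd _ => (Γd d (Ioo_subset_Icc_self hd)).hasDerivAt (Icc_mem_nhds hd.1 hd.2)) ?_
    (hsign.imp (fun k d hd _ => k d hd) (fun k d hd _ => k d hd)) hαβ ?_ α
    (left_mem_Icc.2 hαβ.le)
  · apply this
    simp only [hU₁, hU₂, hT₂, Sb, T₁a, hu, p1, p2, p3, sub_self]
  · intro d hd h1
    have hd' := Ioo_subset_Icc_self hd
    refine ((U₂d d hd h1).sub (U₁d d hd)).congr_deriv ?_
    have r0 := R0 d hd'
    have r1 : R₁ d ≠ 0 := left_ne_zero_of_mul r0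
    have r2 : R₂ d ≠ 0 := right_ne_zero_of_mul r0
    have q1 := eR₁ d hd'
    have q2 := eR₂ d hd'
    simp only [hg, hh]
    generalize R₁ d = ρ₁ at *
    generalize R₂ d = ρ₂ at *
    field_simp
    rw [q1, q2]
    ring
  · simp only [hU₁, hU₂, hT₂, Sa, Sb, T₁a, T₁b, hu, p1, p2, p3, sub_self]

/-- If `A` has a strict sign, two closed solutions are already too many; otherwise the zeros of `A`
cut the circle into the two arcs of `RecSol.three_false_of_arcs`. -/
lemma RecSol.three_false {a₀ a₁ a₂ b₀ b₁ b₂ : ℝ} {A B y₁ y₂ y₃ G₁ G₂ G₃ : ℝ → ℝ}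
    (hA : ∀ t, A t = a₀ + a₁ * t + a₂ * t ^ 2) (hB : ∀ t, B t = b₀ + b₁ * t + b₂ * t ^ 2)
    (hind : ∀ l m : ℝ, (∀ t, l * A t + m * B t = 0) → l = 0 ∧ m = 0)
    (h₁ : RecSol A B y₁ G₁) (h₂ : RecSol A B y₂ G₂) (h₃ : RecSol A B y₃ G₃)
    (h₁₂ : ∀ t ∈ Icc (0:ℝ) 2, y₁ t - y₂ t ≠ 0) (h₁₃ : ∀ t ∈ Icc (0:ℝ) 2, y₁ t - y₃ t ≠ 0)
    (h₂₃ : ∀ t ∈ Icc (0:ℝ) 2, y₂ t - y₃ t ≠ 0) : False := by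
  have hA0 : ∃ t, A t ≠ 0 := by
    by_contra hcon
    push Not at hcon
    have := hind 1 0 fun t => by simp [hcon t]
    simp at this
  rcases quad_sign hA hA0 with ⟨j, hj⟩ | ⟨τ₁, τ₂, hτ₁, hτ, hτ₂, hτ', hs⟩
  · have hI : Icc (0:ℝ) 1 ⊆ Icc 0 2 := Icc_subset_Icc le_rfl (by norm_num)
    have main : ∀ l : ℝ, ¬ ∀ t ∈ Ioo (0:ℝ) 1, t ≠ j → 0 < l * A t + 0 * B t := by
      intro l hl
      have hO : ∀ t ∈ Ioo (0:ℝ) 1, t ∈ Ioo (0:ℝ) 2 ∧ t ≠ 1 ∧ per A t = A t ∧ per B t = B t :=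
        fun t ht => ⟨⟨ht.1, by linarith [ht.2]⟩, ht.2.ne, per_of_le ht.2.le, per_of_le ht.2.le⟩
      have d1 : ∀ {y G : ℝ → ℝ}, RecSol A B y G → ∀ t ∈ Ioo (0:ℝ) 1, t ≠ j →
          HasDerivAt y (-(A t + B t * y t) / y t) t := by
        intro y G hy t ht _
        obtain ⟨o1, o2, o3, o4⟩ := hO t ht
        simpa only [o3, o4] using hy.deriv t o1 o2
      have d2 : ∀ {y G : ℝ → ℝ}, RecSol A B y G → ∀ t ∈ Ioo (0:ℝ) 1, t ≠ j →
          HasDerivAt G (B t / y t) t := by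
        intro y G hy t ht _
        obtain ⟨o1, o2, o3, o4⟩ := hO t ht
        simpa only [o4] using hy.derivG t o1 o2
      have d3 : ∀ {y G : ℝ → ℝ}, RecSol A B y G → y 0 = y 1 := by
        intro y G hy
        simpa using (hy.periodic 0 (by simp)).symm
      exact pair_not_closed zero_lt_one (h₁.cont.mono hI) (h₂.cont.mono hI) (h₁.contG.mono hI)
        (h₂.contG.mono hI) (fun t ht => h₁.ne_zero t (hI ht)) (fun t ht => h₂.ne_zero t (hI ht))
        (fun t ht => h₁₂ t (hI ht)) (d1 h₁) (d1 h₂) (d2 h₁) (d2 h₂) (d3 h₁) (d3 h₂) hl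
    rcases hj with hj | hj
    · exact main 1 fun t ht h => by linarith [hj t ht h]
    · exact main (-1) fun t ht h => by linarith [hj t ht h]
  · set E : ℝ → ℝ := fun t => (y₁ t - y₃ t) / (y₁ t * y₃ t) with hE
    have hEc : ContinuousOn E (Icc 0 2) := (h₁.cont.sub h₃.cont).div (h₁.cont.mul h₃.cont)
      fun t ht => mul_ne_zero (h₁.ne_zero t ht) (h₃.ne_zero t ht)
    have hE0 : ∀ t ∈ Icc (0:ℝ) 2, E t ≠ 0 := fun t ht => div_ne_zero (h₁₃ t ht)
      (mul_ne_zero (h₁.ne_zero t ht) (h₃.ne_zero t ht))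
    have main : ∀ σ : ℝ, σ * σ = 1 → (∀ t ∈ Ioo τ₁ τ₂, 0 < σ * (A t * E t)) →
        ¬ ∀ t ∈ Ioo τ₂ (1 + τ₁), t ≠ 1 → σ * (per A t * E t) < 0 := by
      intro σ hσ i1 i2
      refine h₁.three_false_of_arcs hA hB hind h₂ h₃ h₁₂ h₁₃ h₂₃ hτ₁ hτ hτ₂ hτ' hσ ?_ i2
      intro t ht
      rw [per_of_le (ht.2.le.trans hτ₂)]
      exact i1 t ht
    have m1 : ∀ t ∈ Ioo τ₁ τ₂, t ∈ Icc (0:ℝ) 2 := fun t ht =>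
      ⟨by linarith [ht.1], by linarith [ht.2]⟩
    have m2 : ∀ t ∈ Ioo τ₂ (1 + τ₁), t ∈ Icc (0:ℝ) 2 := fun t ht =>
      ⟨by linarith [ht.1], by linarith [ht.2]⟩
    -- on the circle the second arc is `(τ₂, 1)` followed by `(0, τ₁)`
    have hper : ∀ P : ℝ → Prop, (∀ t ∈ Ioo 0 τ₁, P (A t)) → (∀ t ∈ Ioo τ₂ 1, P (A t)) →
        ∀ t ∈ Ioo τ₂ (1 + τ₁), t ≠ 1 → P (per A t) := by
      intro P k1 k2 t ht h1
      rcases lt_or_gt_of_ne h1 with h | h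
      · rw [per_of_le h.le]; exact k2 t ⟨ht.1, h⟩
      · rw [per_of_gt h]; exact k1 _ ⟨by linarith, by linarith [ht.2]⟩
    rcases hs with ⟨k1, k2, k3⟩ | ⟨k1, k2, k3⟩
    · have k4 := hper (· < 0) k2 k3
      rcases const_sign ordConnected_Icc hEc hE0 with e | e
      · refine main 1 (by norm_num) (fun t ht => ?_) (fun t ht h1 => ?_)
        · rw [one_mul]; exact mul_pos (k1 t ht) (e t (m1 t ht))
        · rw [one_mul]; exact mul_neg_of_neg_of_pos (k4 t ht h1) (e t (m2 t ht))
      · refine main (-1) (by norm_num) (fun t ht => ?_) (fun t ht h1 => ?_)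
        · linarith [mul_neg_of_pos_of_neg (k1 t ht) (e t (m1 t ht))]
        · linarith [mul_pos_of_neg_of_neg (k4 t ht h1) (e t (m2 t ht))]
    · have k4 := hper (0 < ·) k2 k3
      rcases const_sign ordConnected_Icc hEc hE0 with e | e
      · refine main (-1) (by norm_num) (fun t ht => ?_) (fun t ht h1 => ?_)
        · linarith [mul_neg_of_neg_of_pos (k1 t ht) (e t (m1 t ht))]
        · linarith [mul_pos (k4 t ht h1) (e t (m2 t ht))]
      · refine main 1 (by norm_num) (fun t ht => ?_) (fun t ht h1 => ?_)
        · rw [one_mul]; exact mul_pos_of_neg_of_neg (k1 t ht) (e t (m1 t ht))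
        · rw [one_mul]; exact mul_neg_of_pos_of_neg (k4 t ht h1) (e t (m2 t ht))

/-! ### Counting limit cycles -/

/-- If `A` and `B` are proportional, the equation separates as `x' = f(t) g(x)` and every closed
solution off the zeros of `g` lies in a continuum of closed solutions. -/
lemma LimitCycle.root_of_dependent {A B x : ℝ → ℝ} (hA : Continuous A) (hB : Continuous B)
    {l m : ℝ} (hlm : ¬ (l = 0 ∧ m = 0)) (hdep : ∀ t, l * A t + m * B t = 0)
    (hx : LimitCycle A B 1 x) : x 0 ^ 2 * (m * x 0 - l) = 0 := by
  obtain ⟨⟨hsol, hclosed⟩, ε₀, hε₀, hiso⟩ := hx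
  by_contra hg0
  have hn : l ^ 2 + m ^ 2 ≠ 0 := by
    intro h
    exact hlm ⟨by nlinarith [sq_nonneg l, sq_nonneg m], by nlinarith [sq_nonneg l, sq_nonneg m]⟩
  set f : ℝ → ℝ := fun t => (m * A t - l * B t) / (l ^ 2 + m ^ 2) with hf
  set g : ℝ → ℝ := fun v => v ^ 2 * (m * v - l) with hg
  have hfg : ∀ t v, A t * v ^ 3 + B t * v ^ 2 = f t * g v := by
    intro t v
    have e1 : A t = m * f t := by
      simp only [hf]
      field_simp
      linear_combination l * hdep t
    have e2 : B t = -l * f t := by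
      simp only [hf]
      field_simp
      linear_combination m * hdep t
    rw [e1, e2]
    simp only [hg]
    ring
  have hxc : ContinuousOn x (Icc 0 1) := fun t ht => (hsol t ht).continuousWithinAt
  have hgx : ∀ t ∈ Icc (0:ℝ) 1, g (x t) ≠ 0 := by
    intro s hs h
    have hk : AbelSol A B 1 (fun _ => x s) := by
      intro t ht
      rw [hfg, h, mul_zero]
      exact hasDerivWithinAt_const _ _ _
    have := hsol.eq_of_eq hA hB hk hs rfl 0 (by simp)
    exact hg0 (by rw [this]; exact h)
  have hgc : Continuous g := by fun_prop
  have hne : (Icc (0:ℝ) 1).Nonempty := ⟨0, by simp⟩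
  obtain ⟨p, hp, hpmin⟩ := isCompact_Icc.exists_isMinOn hne hxc
  obtain ⟨q, hq, hqmax⟩ := isCompact_Icc.exists_isMaxOn hne hxc
  have hlo : ∀ t ∈ Icc (0:ℝ) 1, x p ≤ x t := fun t ht => hpmin ht
  have hhi : ∀ t ∈ Icc (0:ℝ) 1, x t ≤ x q := fun t ht => hqmax ht
  have hopen : IsOpen {v | g v ≠ 0} := isOpen_ne.preimage hgc
  obtain ⟨δ₁, hδ₁, hb₁⟩ := Metric.isOpen_iff.1 hopen (x p) (hgx p hp)
  obtain ⟨δ₂, hδ₂, hb₂⟩ := Metric.isOpen_iff.1 hopen (x q) (hgx q hq)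
  have hmid : ∀ v ∈ Icc (x p) (x q), g v ≠ 0 := by
    intro v hv
    obtain ⟨t, ht, rfl⟩ := isPreconnected_Icc.intermediate_value hp hq hxc hv
    exact hgx t ht
  set a := x p - δ₁ / 2 with ha
  set b := x q + δ₂ / 2 with hb
  have hpq : x p ≤ x q := hlo q hq
  have hab : a < b := by linarith
  have hgab : ∀ v ∈ Icc a b, g v ≠ 0 := by
    intro v hv
    rcases lt_or_ge v (x p) with h | h
    · apply hb₁
      rw [Metric.mem_ball, Real.dist_eq, abs_lt]
      constructor <;> linarith [hv.1]
    rcases lt_or_ge (x q) v with h' | h'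
    · apply hb₂
      rw [Metric.mem_ball, Real.dist_eq, abs_lt]
      constructor <;> linarith [hv.2]
    · exact hmid v ⟨h, h'⟩
  obtain ⟨σ, hσ, hpos⟩ : ∃ σ : ℝ, σ * σ = 1 ∧ ∀ v ∈ Icc a b, 0 < σ / g v := by
    rcases const_sign ordConnected_Icc hgc.continuousOn hgab with h | h
    · exact ⟨1, by norm_num, fun v hv => div_pos one_pos (h v hv)⟩
    · exact ⟨-1, by norm_num, fun v hv => div_pos_of_neg_of_neg (by norm_num) (h v hv)⟩
  have hσ0 : σ ≠ 0 := by rintro rfl; simp at hσ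
  -- `Φ` straightens the autonomous part: `Φ(x)` moves with velocity `σ f(t)`
  obtain ⟨Φ, hΦc, hΦ⟩ := exists_primitive hab.le (g := fun v => σ / g v)
    (continuousOn_const.div hgc.continuousOn hgab)
  have hΦd : ∀ v ∈ Ioo a b, HasDerivAt Φ (σ / g v) v := fun v hv =>
    (hΦ v (Ioo_subset_Icc_self hv)).hasDerivAt (Icc_mem_nhds hv.1 hv.2)
  have hmono : StrictMonoOn Φ (Icc a b) := strictMonoOn_of_deriv_pos_off (j := a)
    hΦc.continuousOn (fun v hv _ => hΦd v hv) (fun v hv _ => hpos v (Ioo_subset_Icc_self hv))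
  obtain ⟨S, -, Sm, So, -, -, Sd⟩ := exists_inverse (j := a) hab hΦc.continuousOn
    (fun v hv _ => hΦd v hv) (fun v hv _ => hpos v (Ioo_subset_Icc_self hv))
  have hSd : ∀ d ∈ Ioo (Φ a) (Φ b), HasDerivAt S (σ * g (S d)) d := by
    intro d hd
    have hS := So d hd
    refine (Sd d hd hS.1.ne').congr_deriv ?_
    have := hgab _ (Ioo_subset_Icc_self hS)
    rw [inv_div, div_eq_iff hσ0]
    linear_combination -(g (S d)) * hσ
  have hxab : ∀ t ∈ Icc (0:ℝ) 1, x t ∈ Ioo a b := fun t ht =>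
    ⟨by linarith [hlo t ht], by linarith [hhi t ht]⟩
  have h0 : (0:ℝ) ∈ Icc (0:ℝ) 1 := by simp
  have hΦx : ∀ t ∈ Icc (0:ℝ) 1, Φ a < Φ (x t) ∧ Φ (x t) ≤ Φ (x q) := fun t ht =>
    ⟨hmono (left_mem_Icc.2 hab.le) (Ioo_subset_Icc_self (hxab t ht)) (hxab t ht).1,
      hmono.monotoneOn (Ioo_subset_Icc_self (hxab t ht)) (Ioo_subset_Icc_self (hxab q hq))
        (hhi t ht)⟩
  have hΦq : Φ (x q) < Φ b :=
    hmono (Ioo_subset_Icc_self (hxab q hq)) (right_mem_Icc.2 hab.le) (hxab q hq).2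
  have hd0 : Φ (x 0) ∈ Ioo (Φ a) (Φ b) := ⟨(hΦx 0 h0).1, (hΦx 0 h0).2.trans_lt hΦq⟩
  have hS0 : S (Φ (x 0)) = x 0 := hmono.injOn (Ioo_subset_Icc_self (So _ hd0))
    (Ioo_subset_Icc_self (hxab 0 h0)) (Sm _ (Ioo_subset_Icc_self hd0)).2
  obtain ⟨η, hη, hclose⟩ := Metric.continuousAt_iff.1 (hSd _ hd0).continuousAt ε₀ hε₀
  obtain ⟨ε, hε, hε1⟩ := exists_between (lt_min hη (sub_pos.2 hΦq))
  have hεη : ε < η := hε1.trans_le (min_le_left _ _)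
  have hεq : ε < Φ b - Φ (x q) := hε1.trans_le (min_le_right _ _)
  have hmem : ∀ t ∈ Icc (0:ℝ) 1, Φ (x t) + ε ∈ Ioo (Φ a) (Φ b) := fun t ht =>
    ⟨by linarith [(hΦx t ht).1], by linarith [(hΦx t ht).2]⟩
  have hy : ClosedSol A B 1 (fun t => S (Φ (x t) + ε)) := by
    refine ⟨fun t ht => ?_, by simp only [hclosed]⟩
    have d1 : HasDerivWithinAt (fun t => Φ (x t) + ε) (σ / g (x t) * (f t * g (x t)))
        (Icc 0 1) t :=
      ((hΦd _ (hxab t ht)).comp_hasDerivWithinAt t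
        ((hsol t ht).congr_deriv (hfg t (x t)))).add_const ε
    refine ((hSd _ (hmem t ht)).comp_hasDerivWithinAt t d1).congr_deriv ?_
    have := hgx t ht
    rw [hfg]
    field_simp
    linear_combination (g (S (Φ (x t) + ε)) * f t) * hσ
  have heq := hiso _ hy (by
    have := hclose (x := Φ (x 0) + ε) (by
      rw [Real.dist_eq, add_sub_cancel_left, abs_of_pos hε]; exact hεη)
    rwa [hS0, Real.dist_eq] at this)
  have h1 := (Sm _ (Ioo_subset_Icc_self (hmem 0 h0))).2
  rw [heq] at h1
  linarith

lemma encard_le_three_of_dependent {A B : ℝ → ℝ} (hA : Continuous A) (hB : Continuous B)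
    {l m : ℝ} (hlm : ¬ (l = 0 ∧ m = 0)) (hdep : ∀ t, l * A t + m * B t = 0) :
    (LCInits A B 1).encard ≤ 3 := by
  have hsub : LCInits A B 1 ⊆ {0, l / m} := by
    rintro _ ⟨x, hx, rfl⟩
    rcases mul_eq_zero.1 (hx.root_of_dependent hA hB hlm hdep) with h | h
    · exact Or.inl (by simpa using h)
    · right
      have hm : m ≠ 0 := by
        rintro rfl
        exact hlm ⟨by linarith, rfl⟩
      rw [mem_singleton_iff, eq_div_iff hm]
      linarith
  calc (LCInits A B 1).encard ≤ ({0, l / m} : Set ℝ).encard := encard_le_encard hsub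
    _ ≤ ({l / m} : Set ℝ).encard + 1 := encard_insert_le _ _
    _ ≤ 3 := by rw [encard_singleton]; norm_num

lemma encard_le_three_of_independent {a₀ a₁ a₂ b₀ b₁ b₂ : ℝ} {A B : ℝ → ℝ}
    (hAc : Continuous A) (hBc : Continuous B)
    (hA : ∀ t, A t = a₀ + a₁ * t + a₂ * t ^ 2) (hB : ∀ t, B t = b₀ + b₁ * t + b₂ * t ^ 2)
    (hind : ∀ l m : ℝ, (∀ t, l * A t + m * B t = 0) → l = 0 ∧ m = 0) :
    (LCInits A B 1).encard ≤ 3 := by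
  have hN : (LCInits A B 1 \ {0}).encard ≤ 2 := by
    by_contra hcon
    have h3 : (3 : ℕ∞) ≤ (LCInits A B 1 \ {0}).encard := by
      have := Order.add_one_le_of_lt (not_le.1 hcon)
      exact (by norm_num : (3 : ℕ∞) = 2 + 1) ▸ this
    obtain ⟨s, hs, hcard⟩ := exists_subset_encard_eq h3
    obtain ⟨v₁, v₂, v₃, h12, h13, h23, rfl⟩ := encard_eq_three.1 hcard
    obtain ⟨⟨x₁, hx₁, e₁⟩, n₁⟩ := hs (show v₁ ∈ _ by simp)
    obtain ⟨⟨x₂, hx₂, e₂⟩, n₂⟩ := hs (show v₂ ∈ _ by simp)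
    obtain ⟨⟨x₃, hx₃, e₃⟩, n₃⟩ := hs (show v₃ ∈ _ by simp)
    subst e₁ e₂ e₃
    obtain ⟨y₁, G₁, r₁, i₁⟩ := hx₁.1.exists_recSol hAc hBc n₁
    obtain ⟨y₂, G₂, r₂, i₂⟩ := hx₂.1.exists_recSol hAc hBc n₂
    obtain ⟨y₃, G₃, r₃, i₃⟩ := hx₃.1.exists_recSol hAc hBc n₃
    exact r₁.three_false hA hB hind r₂ r₃
      (recSol_sub_ne_zero hAc hBc hx₁.1.1 hx₂.1.1 h12 r₁ r₂ i₁ i₂)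
      (recSol_sub_ne_zero hAc hBc hx₁.1.1 hx₃.1.1 h13 r₁ r₃ i₁ i₃)
      (recSol_sub_ne_zero hAc hBc hx₂.1.1 hx₃.1.1 h23 r₂ r₃ i₂ i₃)
  have hsub : LCInits A B 1 ⊆ insert 0 (LCInits A B 1 \ {0}) := by
    intro v hv
    by_cases h : v = 0
    · exact Or.inl h
    · exact Or.inr ⟨hv, h⟩
  calc (LCInits A B 1).encard ≤ (insert 0 (LCInits A B 1 \ {0})).encard := encard_le_encard hsub
    _ ≤ (LCInits A B 1 \ {0}).encard + 1 := encard_insert_le _ _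
    _ ≤ 2 + 1 := by gcongr
    _ = 3 := by norm_num

/-- The Abel equation with quadratic polynomial coefficients on `[0,1]`
has at most three limit cycles (including `x = 0` when it is isolated). -/
theorem abel_quadratic_at_most_three_limit_cycles
    (a₀ a₁ a₂ b₀ b₁ b₂ : ℝ) :
    Set.encard (LCInits
      (fun t => a₀ + a₁ * t + a₂ * t ^ 2)
      (fun t => b₀ + b₁ * t + b₂ * t ^ 2)
      1) ≤ 3 := by
  have hA : Continuous fun t : ℝ => a₀ + a₁ * t + a₂ * t ^ 2 := by fun_prop
  have hB : Continuous fun t : ℝ => b₀ + b₁ * t + b₂ * t ^ 2 := by fun_prop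
  by_cases hind : ∀ l m : ℝ,
      (∀ t, l * (a₀ + a₁ * t + a₂ * t ^ 2) + m * (b₀ + b₁ * t + b₂ * t ^ 2) = 0) → l = 0 ∧ m = 0
  · exact encard_le_three_of_independent hA hB (fun _ => rfl) (fun _ => rfl) hind
  · push Not at hind
    obtain ⟨l, m, hdep, hlm⟩ := hind
    exact encard_le_three_of_dependent hA hB (fun h => hlm h.1 h.2) hdep
end
end

section
/- Let A, B : [0,T] → ℝ be continuous and let x : [0,T] → ℝ be a solution of the Abel equation x' = A(t)x³ + B(t)x² with x(0) = x(T) = x₀ ≠ 0 (so that x(t) ≠ 0 for all t). If ∫₀ᵀ (3A(t)x(t)² + 2B(t)x(t)) dt = 0 (equivalently, the derivative of the Poincaré map at x₀ equals 1), then ∫₀ᵀ A(t)x(t)² dt = 0 and ∫₀ᵀ B(t)x(t) dt = 0. -/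
/-!
Along a solution, `x' = p x` with `p = A x² + B x` continuous, so `x · exp (-∫₀ᵗ p)` is constant.
Evaluating at `0` and `T` and using `x 0 = x T ≠ 0` gives `exp (-∫₀ᵀ p) = 1`, i.e.
`∫ A x² + ∫ B x = 0`. Together with the hypothesis `3 ∫ A x² + 2 ∫ B x = 0` this linear system
has only the zero solution. Reading the equation as linear in `x` makes a separate proof that
`x` never vanishes unnecessary.
-/

open Set intervalIntegral

noncomputable section

/-- For a non-zero closed solution `x` of the Abel equation with
`P'(x₀) = 1` (i.e. `∫₀ᵀ (3A x² + 2B x) dt = 0`), both `∫₀ᵀ A x² dt = 0` and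
`∫₀ᵀ B x dt = 0`. -/
theorem abel_integral_vanishing_of_PoincareDeriv_one
    (T : ℝ) (hT : 0 < T) (A B : ℝ → ℝ)
    (hAc : ContinuousOn A (Set.Icc (0:ℝ) T))
    (hBc : ContinuousOn B (Set.Icc (0:ℝ) T))
    (x : ℝ → ℝ) (hsol : AbelSol A B T x)
    (hclosed : x 0 = x T) (hx0 : x 0 ≠ 0)
    (hP' : ∫ t in (0:ℝ)..T, (3 * A t * x t ^ 2 + 2 * B t * x t) = 0) :
    (∫ t in (0:ℝ)..T, A t * x t ^ 2) = 0 ∧ (∫ t in (0:ℝ)..T, B t * x t) = 0 := by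
  have hxc : ContinuousOn x (Set.Icc (0:ℝ) T) := fun t ht => (hsol t ht).continuousWithinAt
  have hac : ContinuousOn (fun t => A t * x t ^ 2) (Set.Icc (0:ℝ) T) := hAc.mul (hxc.pow 2)
  have hbc : ContinuousOn (fun t => B t * x t) (Set.Icc (0:ℝ) T) := hBc.mul hxc
  -- `q` is a continuous extension to `ℝ` of `p = A x² + B x`, so that its primitive is
  -- differentiable everywhere.
  obtain ⟨q, hq, hqe⟩ : ∃ q : ℝ → ℝ, Continuous q ∧
      ∀ t ∈ Set.Icc (0:ℝ) T, q t = A t * x t ^ 2 + B t * x t :=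
    ⟨Set.IccExtend hT.le ((Set.Icc (0:ℝ) T).domRestrict fun t => A t * x t ^ 2 + B t * x t),
      (hac.add hbc).domRestrict.Icc_extend', fun t ht => Set.IccExtend_of_mem _ _ ht⟩
  have hG : ∀ t, HasDerivAt (fun s => ∫ u in (0:ℝ)..s, q u) (q t) t := fun t =>
    hq.integral_hasStrictDerivAt 0 t |>.hasDerivAt
  have hder : ∀ t ∈ Set.Icc (0:ℝ) T,
      HasDerivWithinAt (fun s => x s * Real.exp (-∫ u in (0:ℝ)..s, q u)) 0
        (Set.Icc (0:ℝ) T) t := by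
    intro t ht
    refine ((hsol t ht).mul (hG t).neg.exp.hasDerivWithinAt).congr_deriv ?_
    rw [hqe t ht]
    ring
  have hconst := constant_of_has_deriv_right_zero
    (fun t ht => (hder t ht).continuousWithinAt)
    (fun t ht => (hder t ⟨ht.1, ht.2.le⟩).mono_of_mem_nhdsWithin
      (Icc_mem_nhdsGE_of_mem ht)) T ⟨hT.le, le_rfl⟩
  have hq0 : ∫ u in (0:ℝ)..T, q u = 0 := by
    simpa [← hclosed, hx0] using hconst
  have ha : IntervalIntegrable (fun t => A t * x t ^ 2) MeasureTheory.volume 0 T :=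
    hac.intervalIntegrable_of_Icc hT.le
  have hb : IntervalIntegrable (fun t => B t * x t) MeasureTheory.volume 0 T :=
    hbc.intervalIntegrable_of_Icc hT.le
  have h1 : (∫ t in (0:ℝ)..T, A t * x t ^ 2) + (∫ t in (0:ℝ)..T, B t * x t) = 0 := by
    rw [← intervalIntegral.integral_add ha hb]
    refine Eq.trans (intervalIntegral.integral_congr fun t ht => ?_) hq0
    rw [Set.uIcc_of_le hT.le] at ht
    exact (hqe t ht).symm
  have h2 : 3 * (∫ t in (0:ℝ)..T, A t * x t ^ 2) + 2 * (∫ t in (0:ℝ)..T, B t * x t) = 0 := by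
    rw [← intervalIntegral.integral_const_mul, ← intervalIntegral.integral_const_mul,
      ← intervalIntegral.integral_add (ha.const_mul 3) (hb.const_mul 2)]
    refine Eq.trans (intervalIntegral.integral_congr fun t _ => ?_) hP'
    ring
  constructor <;> linarith
end
end
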